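/- Let g_1(z) = ((1+i)/2)·z and g_2(z) = ((1−i)/2)·z + 1 + i on ℂ, and let K be the unique nonempty compact subset of ℂ with K = g_1(K) ∪ g_2(K) (the Lévy dragon). Then the two-dimensional Lebesgue measure of K equals 1. -/

import Mathlib

open MeasureTheory

/-!
Half of the dragon is a compact set `J` with `(1 - i) J = J ∪ (-i J + 1)`. The left side has
measure `2 |J|`, so `J` and `-i J + 1` overlap in a null set. Subdividing `J` and `g J` in this way
shows that they overlap in a null set for *every* motion `g ≠ 1` of the group
`z ↦ u z + b`, `u ∈ {1, i, -1, -i}`, `b ∈ ℤ[i]`: passing from a tile to the tile it is a piece of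
shortens the translation `b` once `|b|² > 5`, and for the remaining `g` a finite search climbs from
`J` and `g J` to two distinct pieces of the same tile. The union of all tiles is closed, relatively
dense and stable under division by `1 - i`, hence the whole plane. So `J` is a
fundamental domain of the group of motions, and comparing it with the unit square gives `4 |J| = 1`.
-/

namespace LevyDragon

open Complex Set Filter Topology Pointwise
open scoped ENNReal

theorem aedisjoint_of_add_le_measure_union {α : Type*} [MeasurableSpace α] {μ : Measure α}
    {s t : Set α} (hs : μ s ≠ ∞) (ht : μ t ≠ ∞) (htm : NullMeasurableSet t μ)
    (hst : μ s + μ t ≤ μ (s ∪ t)) : AEDisjoint μ s t := by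
  have hle : μ (s ∪ t) + μ (s ∩ t) ≤ μ (s ∪ t) + 0 := by
    rwa [measure_union_add_inter₀ s htm, add_zero]
  exact nonpos_iff_eq_zero.1 ((ENNReal.add_le_add_iff_left (measure_union_ne_top hs ht)).1 hle)

theorem aedisjoint_smul_iff {G α : Type*} [Group G] [MulAction G α] [MeasurableSpace α]
    {μ : Measure α} [SMulInvariantMeasure G α μ] [MeasurableConstSMul G α] (g : G) {s t : Set α} :
    AEDisjoint μ (g • s) (g • t) ↔ AEDisjoint μ s t := by
  rw [AEDisjoint, AEDisjoint, ← smul_set_inter, measure_smul]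

-- Replacing `x` by `c • x` improves any approximation of `x` by points of `T` by a factor `‖c‖`.
theorem eq_univ_of_subset_smul {𝕜 E : Type*} [NormedField 𝕜] [SeminormedAddCommGroup E]
    [NormedSpace 𝕜 E] {c : 𝕜} (hc : 1 < ‖c‖) {T : Set E} (hT : IsClosed T) (hcT : T ⊆ c • T)
    {r : ℝ} (hr : ∀ x, ∃ t ∈ T, dist x t ≤ r) : T = univ := by
  have hc₀ : 0 < ‖c‖ := one_pos.trans hc
  have approx : ∀ (n : ℕ) (x : E), ∃ t ∈ T, dist x t ≤ r / ‖c‖ ^ n := by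
    intro n
    induction n with
    | zero => simpa using hr
    | succ n ih =>
      intro x
      obtain ⟨_, ht, hxt⟩ := ih (c • x)
      obtain ⟨t, htT, rfl⟩ := hcT ht
      refine ⟨t, htT, ?_⟩
      rw [dist_smul₀] at hxt
      rwa [pow_succ, ← div_div, le_div_iff₀' hc₀]
  have hlim : Tendsto (fun n : ℕ => r / ‖c‖ ^ n) atTop (𝓝 0) :=
    tendsto_const_nhds.div_atTop (tendsto_pow_atTop_atTop_of_one_lt hc)
  refine eq_univ_of_forall fun x => hT.closure_subset (Metric.mem_closure_iff.2 fun ε hε => ?_)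
  obtain ⟨n, hn⟩ := (hlim.eventually_lt_const hε).exists
  obtain ⟨t, htT, hxt⟩ := approx n x
  exact ⟨t, htT, hxt.trans_lt hn⟩

theorem volume_smul (c : ℂ) (s : Set ℂ) :
    volume (c • s) = ENNReal.ofReal (normSq c) * volume s := by
  have h : c • s = Algebra.lmul ℝ ℂ c '' s := rfl
  rw [h, Measure.addHaar_image_linearMap, ← Algebra.norm_apply, Algebra.norm_complex_apply,
    abs_of_nonneg (normSq_nonneg c)]

theorem aedisjoint_const_smul {s t : Set ℂ} (h : AEDisjoint volume s t) {c : ℂ} (hc : c ≠ 0) :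
    AEDisjoint volume (c • s) (c • t) := by
  rw [AEDisjoint, ← smul_set_inter₀ hc, volume_smul, h.eq, mul_zero]

/-- The Gaussian unit `i`. -/
def iUnit : GaussianIntˣ := ⟨⟨0, 1⟩, ⟨0, -1⟩, rfl, rfl⟩

theorem norm_unit (u : GaussianIntˣ) : (u : GaussianInt).norm = 1 :=
  (Zsqrtd.norm_eq_one_iff' (by decide) _).2 u.isUnit

instance : Fintype GaussianIntˣ where
  elems := {1, iUnit, -1, -iUnit}
  complete u := by
    have hu := norm_unit u
    rw [Zsqrtd.norm_def] at hu
    obtain ⟨hre, hre'⟩ := abs_le.1 (abs_le_one_iff_mul_self_le_one.2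
      (by linarith [mul_self_nonneg (u : GaussianInt).im] :
        (u : GaussianInt).re * (u : GaussianInt).re ≤ 1))
    obtain ⟨him, him'⟩ := abs_le.1 (abs_le_one_iff_mul_self_le_one.2
      (by linarith [mul_self_nonneg (u : GaussianInt).re] :
        (u : GaussianInt).im * (u : GaussianInt).im ≤ 1))
    simp only [Finset.mem_insert, Finset.mem_singleton, Units.ext_iff, Zsqrtd.ext_iff]
    generalize (u : GaussianInt).re = x, (u : GaussianInt).im = y at *
    interval_cases x <;> interval_cases y <;> simp_all [iUnit]

theorem card_units : Fintype.card GaussianIntˣ = 4 := rfl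

theorem odd_re_add_im (u : GaussianIntˣ) :
    ((u : GaussianInt).re + (u : GaussianInt).im) % 2 = 1 := by
  decide +revert

theorem norm_one_sub_iUnit_mul (b : GaussianInt) : ((1 - iUnit) * b).norm = 2 * b.norm := by
  rw [Zsqrtd.norm_mul]; rfl

-- `|u + (1 - i) b| ≥ √2 |b| - 1`, so a failure would force `|u + (1 - i) b| ≤ √2 + 1`, and
-- `(√2 + 1)² < 6`.
theorem norm_lt_norm_unit_add {u : GaussianIntˣ} {b : GaussianInt}
    (h : 5 < (u + (1 - iUnit) * b).norm) : b.norm < (u + (1 - iUnit) * b).norm := by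
  have hx := norm_one_sub_iUnit_mul b
  have hu := norm_unit u
  generalize (1 - iUnit : GaussianInt) * b = x at *
  by_contra! hle
  simp only [Zsqrtd.norm_def, Zsqrtd.re_add, Zsqrtd.im_add] at *
  generalize (u : GaussianInt).re = p, (u : GaussianInt).im = q, x.re = y, x.im = z at *
  have cauchy_schwarz : (p * y + q * z) ^ 2 ≤ y * y + z * z := by
    have lagrange_identity : (p * p + q * q) * (y * y + z * z) =
      (p * y + q * z) ^ 2 + (p * z - q * y) ^ 2 := by ring
    nlinarith [lagrange_identity, sq_nonneg (p * z - q * y)]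
  nlinarith

/-! ### Motions of the square lattice -/

/-- The orientation-preserving motion `z ↦ rot * z + trans` of the square lattice; the action on
the plane is `LevyDragon.Motion.instMulActionComplex`. -/
@[ext]
structure Motion where
  rot : GaussianIntˣ
  trans : GaussianInt
deriving DecidableEq

namespace Motion

instance : Mul Motion := ⟨fun g h => ⟨g.rot * h.rot, g.rot * h.trans + g.trans⟩⟩
instance : One Motion := ⟨⟨1, 0⟩⟩
instance : Inv Motion := ⟨fun g => ⟨g.rot⁻¹, -(↑g.rot⁻¹ * g.trans)⟩⟩

@[simp] theorem mul_rot (g h : Motion) : (g * h).rot = g.rot * h.rot := rfl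
@[simp] theorem mul_trans (g h : Motion) : (g * h).trans = g.rot * h.trans + g.trans := rfl
@[simp] theorem one_rot : (1 : Motion).rot = 1 := rfl
@[simp] theorem one_trans : (1 : Motion).trans = 0 := rfl
@[simp] theorem inv_rot (g : Motion) : g⁻¹.rot = g.rot⁻¹ := rfl
@[simp] theorem inv_trans (g : Motion) : g⁻¹.trans = -(↑g.rot⁻¹ * g.trans) := rfl

instance : Group Motion :=
  Group.ofLeftAxioms
    (fun g h k => Motion.ext (mul_assoc _ _ _)
      (by simp only [mul_rot, mul_trans, Units.val_mul]; ring))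
    (fun g => Motion.ext (one_mul _) (by simp))
    (fun g => Motion.ext (inv_mul_cancel _) (by simp))

/-- Conjugation by the similarity `z ↦ (1 - i) z`. -/
def dilate : Motion →* Motion where
  toFun g := ⟨g.rot, (1 - iUnit) * g.trans⟩
  map_one' := Motion.ext rfl (by rw [one_trans, mul_zero])
  map_mul' g h := Motion.ext rfl (by simp only [mul_trans]; ring)

@[simp] theorem dilate_rot (g : Motion) : (dilate g).rot = g.rot := rfl
@[simp] theorem dilate_trans (g : Motion) : (dilate g).trans = (1 - iUnit) * g.trans := rfl

/-- The inverse of `dilate` on the motions whose translation part is divisible by `1 - i`; the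
divisions are not exact for the other motions. -/
def contract (g : Motion) : Motion :=
  ⟨g.rot, ⟨(g.trans.re - g.trans.im) / 2, (g.trans.re + g.trans.im) / 2⟩⟩

theorem dilate_contract {g : Motion} (hg : (g.trans.re + g.trans.im) % 2 = 0) :
    dilate (contract g) = g := by
  refine Motion.ext rfl (Zsqrtd.ext ?_ ?_) <;>
    simp only [dilate_trans, contract, iUnit, Zsqrtd.re_mul, Zsqrtd.im_mul, Zsqrtd.re_sub,
      Zsqrtd.im_sub, Zsqrtd.re_one, Zsqrtd.im_one] <;>
    lia

/-- The motion `z ↦ -i z + 1`. -/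
def quarterTurn : Motion := ⟨-iUnit, 1⟩

/-- The motions carrying a self-similar tile `J` to the two pieces of `(1 - i) J`. -/
def digits : Finset Motion := {1, quarterTurn}

theorem one_mem_digits : 1 ∈ digits := Finset.mem_insert_self _ _

theorem quarterTurn_mem_digits : quarterTurn ∈ digits := by simp [digits]

/-- The motion `h` such that the tile `g • J` is one of the two pieces of `(1 - i) (h • J)`. -/
def parent (g : Motion) : Motion :=
  if (g.trans.re + g.trans.im) % 2 = 0 then contract g else contract (g * quarterTurn⁻¹)

theorem exists_dilate_parent_mul_eq (g : Motion) : ∃ q ∈ digits, dilate (parent g) * q = g := by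
  by_cases hg : (g.trans.re + g.trans.im) % 2 = 0
  · exact ⟨1, one_mem_digits, by rw [parent, if_pos hg, mul_one, dilate_contract hg]⟩
  · have htrans : (g * quarterTurn⁻¹).trans = g.trans - iUnit * g.rot := by
      rw [mul_trans, inv_trans, show quarterTurn.rot⁻¹ = iUnit from rfl,
        show quarterTurn.trans = 1 from rfl]
      ring
    have heven : ((g * quarterTurn⁻¹).trans.re + (g * quarterTurn⁻¹).trans.im) % 2 = 0 := by
      have hodd := odd_re_add_im g.rot
      rw [htrans]
      simp only [iUnit, Zsqrtd.re_sub, Zsqrtd.im_sub, Zsqrtd.re_mul, Zsqrtd.im_mul]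
      lia
    exact ⟨quarterTurn, quarterTurn_mem_digits,
      by rw [parent, if_neg hg, dilate_contract heven, inv_mul_cancel_right]⟩

theorem norm_trans_lt_norm_trans_dilate_mul {g q : Motion} (hq : q ∈ digits)
    (h : 5 < (dilate g * q).trans.norm) : g.trans.norm < (dilate g * q).trans.norm := by
  simp only [digits, Finset.mem_insert, Finset.mem_singleton] at hq
  obtain rfl | rfl := hq
  · rw [mul_one, dilate_trans, norm_one_sub_iUnit_mul] at *
    lia
  · rw [mul_trans, dilate_rot, show quarterTurn.trans = 1 from rfl, mul_one, dilate_trans] at *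
    exact norm_lt_norm_unit_add h

theorem norm_trans_parent_lt {g : Motion} (hg : 5 < g.trans.norm) :
    (parent g).trans.norm < g.trans.norm := by
  obtain ⟨q, hq, hparent⟩ := exists_dilate_parent_mul_eq g
  simpa only [hparent] using
    norm_trans_lt_norm_trans_dilate_mul (g := parent g) hq (by rwa [hparent])

/-- The motions `g` for which finitely many subdivisions of a self-similar tile `J` and of `g • J`
show that the two overlap in a null set: the two pieces of `(1 - i) J` do, and if `J` and `g • J`
do, then so does each piece of `(1 - i) J` with each piece of `(1 - i) (g • J)`. -/
inductive Separated : Motion → Prop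
  | inv_mul {p q : Motion} (hp : p ∈ digits) (hq : q ∈ digits) (hpq : p ≠ q) :
      Separated (p⁻¹ * q)
  | inv_mul_dilate_mul {g p q : Motion} (hg : Separated g) (hp : p ∈ digits) (hq : q ∈ digits) :
      Separated (p⁻¹ * dilate g * q)

theorem Separated.of_parent {g p : Motion} (hg : g ≠ 1) (hp : p ∈ digits)
    (h : parent (p * g) = 1 ∨ Separated (parent (p * g))) : Separated g := by
  obtain ⟨q, hq, hparent⟩ := exists_dilate_parent_mul_eq (p * g)
  have hgq : p⁻¹ * dilate (parent (p * g)) * q = g := by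
    rw [mul_assoc, hparent, inv_mul_cancel_left]
  rw [← hgq]
  obtain h | h := h
  · rw [h, map_one, mul_one] at hgq ⊢
    refine .inv_mul hp hq ?_
    rintro rfl
    exact hg (by rw [← hgq, inv_mul_cancel])
  · exact .inv_mul_dilate_mul h hp hq

/-- Depth-bounded search for a derivation of `Separated g` by `Separated.of_parent`. -/
def separatedWithin : ℕ → Motion → Bool
  | 0, _ => false
  | n + 1, g => ∃ p ∈ digits, parent (p * g) = 1 ∨ separatedWithin n (parent (p * g))

theorem Separated.of_separatedWithin {n : ℕ} {g : Motion} (hg : g ≠ 1)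
    (h : separatedWithin n g = true) : Separated g := by
  induction n generalizing g with
  | zero => exact absurd h Bool.false_ne_true
  | succ n ih =>
    simp only [separatedWithin, decide_eq_true_eq] at h
    obtain ⟨p, hp, h⟩ := h
    exact .of_parent hg hp
      (or_iff_not_imp_left.2 fun hparent => ih hparent (h.resolve_left hparent))

theorem separatedWithin_eight :
    ∀ u : GaussianIntˣ, ∀ x ∈ Finset.Icc (-2 : ℤ) 2, ∀ y ∈ Finset.Icc (-2 : ℤ) 2,
      x * x + y * y ≤ 5 → (⟨u, ⟨x, y⟩⟩ : Motion) ≠ 1 → separatedWithin 8 ⟨u, ⟨x, y⟩⟩ = true := by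
  decide +kernel

theorem Separated.of_norm_trans_le {g : Motion} (hg : g.trans.norm ≤ 5) (hne : g ≠ 1) :
    Separated g := by
  rw [Zsqrtd.norm_def] at hg
  refine .of_separatedWithin hne
    (separatedWithin_eight g.rot g.trans.re ?_ g.trans.im ?_ ?_ hne)
  · have him := mul_self_nonneg g.trans.im
    exact Finset.mem_Icc.2 ⟨by nlinarith [him], by nlinarith [him]⟩
  · have hre := mul_self_nonneg g.trans.re
    exact Finset.mem_Icc.2 ⟨by nlinarith [hre], by nlinarith [hre]⟩
  · linarith

theorem Separated.of_ne_one {g : Motion} (hg : g ≠ 1) : Separated g := by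
  induction hn : g.trans.norm.toNat using Nat.strong_induction_on generalizing g with
  | _ n ih =>
    obtain hsmall | hlarge := le_or_gt g.trans.norm 5
    · exact .of_norm_trans_le hsmall hg
    · refine .of_parent hg one_mem_digits ?_
      rw [one_mul]
      have hlt := norm_trans_parent_lt hlarge
      exact or_iff_not_imp_left.2 fun hparent => ih _ (by lia) hparent rfl

end Motion

/-! ### The action on the plane -/

/-- The Gaussian integers as a lattice in the plane. -/
abbrev lattice : Submodule ℤ ℂ := Submodule.span ℤ (range basisOneI)

theorem mem_lattice {z : ℂ} : z ∈ lattice ↔ ∃ b : GaussianInt, (b : ℂ) = z := by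
  rw [lattice, coe_basisOneI, Matrix.range_cons, Matrix.range_cons, Matrix.range_empty,
    union_empty, singleton_union, Submodule.mem_span_pair]
  constructor
  · rintro ⟨x, y, rfl⟩
    exact ⟨⟨x, y⟩, by simp [GaussianInt.toComplex_def]⟩
  · rintro ⟨⟨x, y⟩, rfl⟩
    exact ⟨x, y, by simp [GaussianInt.toComplex_def]⟩

/-- The identification of the Gaussian integers with the points of `lattice`. -/
noncomputable def latticeEquiv : GaussianInt ≃ lattice :=
  .ofBijective (fun b => ⟨b, mem_lattice.2 ⟨b, rfl⟩⟩)
    ⟨fun _ _ h => GaussianInt.toComplex_injective (congrArg Subtype.val h),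
      fun z => (mem_lattice.1 z.2).imp fun _ hb => Subtype.ext hb⟩

@[simp] theorem coe_latticeEquiv (b : GaussianInt) : (latticeEquiv b : ℂ) = b := rfl

theorem exists_dist_gaussianInt_le (z : ℂ) : ∃ b : GaussianInt, dist z b ≤ 1 := by
  refine ⟨⟨round z.re, round z.im⟩, ?_⟩
  rw [dist_eq_norm, GaussianInt.toComplex_def']
  refine (norm_le_abs_re_add_abs_im _).trans ?_
  have hre := abs_sub_round z.re
  have him := abs_sub_round z.im
  simp only [sub_re, add_re, mul_re, intCast_re, intCast_im, I_re, I_im, sub_im, add_im, mul_im,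
    mul_zero, mul_one, sub_zero, add_zero, zero_add]
  linarith

theorem volume_fundamentalDomain_basisOneI :
    volume (ZSpan.fundamentalDomain basisOneI) = 1 := by
  rw [measure_congr (ZSpan.fundamentalDomain_ae_parallelepiped basisOneI volume),
    ← toBasis_orthonormalBasisOneI, OrthonormalBasis.coe_toBasis,
    orthonormalBasisOneI.volume_parallelepiped]

theorem coe_iUnit : ((iUnit : GaussianInt) : ℂ) = I := by
  simp [iUnit, GaussianInt.toComplex_def]

theorem normSq_coe_unit (u : GaussianIntˣ) : normSq ((u : GaussianInt) : ℂ) = 1 := by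
  rw [← GaussianInt.intCast_real_norm, norm_unit, Int.cast_one]

theorem normSq_one_sub_I : normSq (1 - I) = 2 := by
  norm_num [normSq_apply]

theorem one_sub_I_ne_zero : (1 - I : ℂ) ≠ 0 := by
  rw [← normSq_pos, normSq_one_sub_I]; norm_num

theorem one_lt_norm_one_sub_I : 1 < ‖(1 - I : ℂ)‖ := by
  rw [← one_lt_sq_iff₀ (norm_nonneg _), ← normSq_eq_norm_sq, normSq_one_sub_I]; norm_num

namespace Motion

noncomputable instance instMulActionComplex : MulAction Motion ℂ where
  smul g z := (g.rot : GaussianInt) * z + (g.trans : GaussianInt)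
  one_smul z := by
    change ((1 : GaussianIntˣ) : GaussianInt) * z + (0 : GaussianInt) = z
    simp
  mul_smul g h z := by
    change ((g * h).rot : GaussianInt) * z + ((g * h).trans : GaussianInt) =
      (g.rot : GaussianInt) * ((h.rot : GaussianInt) * z + (h.trans : GaussianInt)) +
        (g.trans : GaussianInt)
    simp only [mul_rot, mul_trans, Units.val_mul, map_mul, map_add]
    ring

theorem smul_eq (g : Motion) (z : ℂ) :
    g • z = (g.rot : GaussianInt) * z + (g.trans : GaussianInt) := rfl

theorem smul_set_eq (g : Motion) (s : Set ℂ) :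
    g • s = (g.trans : ℂ) +ᵥ ((g.rot : GaussianInt) : ℂ) • s := by
  rw [← image_smul, ← image_smul, ← image_vadd, image_image]
  exact image_congr fun z _ => add_comm _ _

theorem one_sub_I_smul_smul (g : Motion) (s : Set ℂ) :
    (1 - I) • g • s = dilate g • (1 - I) • s := by
  simp only [← image_smul, image_image]
  refine image_congr fun z _ => ?_
  simp only [smul_eq, smul_eq_mul, dilate_rot, dilate_trans, map_mul, map_sub, map_one, coe_iUnit]
  ring

instance : ContinuousConstSMul Motion ℂ where
  continuous_const_smul g := by
    simp only [smul_eq]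
    fun_prop

instance : SMulInvariantMeasure Motion ℂ volume :=
  ((smulInvariantMeasure_tfae Motion volume).out 0 4).2 fun g s => by
    rw [smul_set_eq, measure_vadd, volume_smul, normSq_coe_unit, ENNReal.ofReal_one, one_mul]

/-- A motion is determined by its rotation and its translation. -/
noncomputable def equivProd : Motion ≃ GaussianIntˣ × lattice where
  toFun g := (g.rot, latticeEquiv g.trans)
  invFun p := ⟨p.1, latticeEquiv.symm p.2⟩
  left_inv g := by simp
  right_inv p := by simp

instance : Countable Motion := equivProd.injective.countable

theorem equivProd_symm_smul (u : GaussianIntˣ) (b : lattice) (s : Set ℂ) :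
    equivProd.symm (u, b) • s = b +ᵥ ((u : GaussianInt) : ℂ) • s := by
  have hb : ((latticeEquiv.symm b : GaussianInt) : ℂ) = b := by
    rw [← coe_latticeEquiv, Equiv.apply_symm_apply]
  rw [smul_set_eq]
  change ((latticeEquiv.symm b : GaussianInt) : ℂ) +ᵥ _ = _
  rw [hb]
  rfl

theorem isClosed_iUnion_smul {s : Set ℂ} (hs : IsCompact s) : IsClosed (⋃ g : Motion, g • s) := by
  have hunion : ⋃ g : Motion, g • s =
      (lattice : Set ℂ) + ⋃ u : GaussianIntˣ, ((u : GaussianInt) : ℂ) • s := by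
    rw [← equivProd.symm.surjective.iUnion_comp fun g => g • s, iUnion_prod', add_iUnion]
    refine iUnion_congr fun u => ?_
    simp only [equivProd_symm_smul]
    rw [← vadd_eq_add, ← iUnion_vadd_set, biUnion_eq_iUnion]
    rfl
  have hlattice : IsClosed (lattice.toAddSubgroup : Set ℂ) := AddSubgroup.isClosed_of_discrete
  rw [hunion]
  exact IsClosed.add_right_of_isCompact hlattice (isCompact_iUnion fun u => hs.smul _)

end Motion

/-! ### Self-similar tiles -/

/-- A set cut by the similarity `z ↦ (1 - i) z` into copies of itself under the motions
`Motion.digits`. Half of the Lévy dragon is such a set. -/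
def IsSelfSimilar (J : Set ℂ) : Prop :=
  (1 - I) • J = ⋃ p ∈ Motion.digits, p • J

namespace IsSelfSimilar

open Motion

variable {J : Set ℂ}

theorem digit_smul_subset (hJ : IsSelfSimilar J) {p : Motion} (hp : p ∈ digits) :
    p • J ⊆ (1 - I) • J :=
  hJ ▸ subset_biUnion_of_mem (u := fun p : Motion => p • J) hp

theorem aedisjoint_quarterTurn_smul (hJ : IsSelfSimilar J) (hc : IsCompact J) :
    AEDisjoint volume J (quarterTurn • J) := by
  refine aedisjoint_of_add_le_measure_union hc.measure_ne_top
    (hc.smul quarterTurn).measure_ne_top (hc.smul quarterTurn).measurableSet.nullMeasurableSet ?_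
  have hunion : (1 - I) • J = J ∪ quarterTurn • J := by
    rw [hJ]; simp [digits]
  rw [← hunion, volume_smul, normSq_one_sub_I, measure_smul, ENNReal.ofReal_ofNat, two_mul]

theorem aedisjoint_digits_smul (hJ : IsSelfSimilar J) (hc : IsCompact J) {p q : Motion}
    (hp : p ∈ digits) (hq : q ∈ digits) (hpq : p ≠ q) : AEDisjoint volume (p • J) (q • J) := by
  simp only [digits, Finset.mem_insert, Finset.mem_singleton] at hp hq
  have h := hJ.aedisjoint_quarterTurn_smul hc
  obtain rfl | rfl := hp <;> obtain rfl | rfl := hq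
  · exact absurd rfl hpq
  · rwa [one_smul]
  · rw [one_smul]
    exact h.symm
  · exact absurd rfl hpq

theorem aedisjoint_smul_of_separated (hJ : IsSelfSimilar J) (hc : IsCompact J) {g : Motion}
    (hg : Separated g) : AEDisjoint volume J (g • J) := by
  induction hg with
  | @inv_mul p q hp hq hpq =>
    rw [← aedisjoint_smul_iff p, smul_smul, mul_inv_cancel_left]
    exact hJ.aedisjoint_digits_smul hc hp hq hpq
  | @inv_mul_dilate_mul g p q _ hp hq ih =>
    rw [← aedisjoint_smul_iff p, mul_assoc, smul_smul, mul_inv_cancel_left, mul_smul]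
    have hdilate := aedisjoint_const_smul ih one_sub_I_ne_zero
    rw [one_sub_I_smul_smul] at hdilate
    exact hdilate.mono (hJ.digit_smul_subset hp) (smul_set_mono (hJ.digit_smul_subset hq))

theorem iUnion_smul_subset (hJ : IsSelfSimilar J) :
    ⋃ g : Motion, g • J ⊆ (1 - I) • ⋃ g : Motion, g • J := by
  refine iUnion_subset fun g => ?_
  obtain ⟨q, hq, hg⟩ := exists_dilate_parent_mul_eq g
  calc g • J = dilate (parent g) • q • J := by rw [smul_smul, hg]
    _ ⊆ dilate (parent g) • (1 - I) • J := smul_set_mono (hJ.digit_smul_subset hq)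
    _ = (1 - I) • parent g • J := (one_sub_I_smul_smul _ _).symm
    _ ⊆ (1 - I) • ⋃ g : Motion, g • J := smul_set_mono (subset_iUnion (fun g : Motion => g • J) _)

theorem iUnion_smul_eq_univ (hJ : IsSelfSimilar J) (hc : IsCompact J) (hne : J.Nonempty) :
    ⋃ g : Motion, g • J = univ := by
  obtain ⟨p, hp⟩ := hne
  refine eq_univ_of_subset_smul one_lt_norm_one_sub_I (isClosed_iUnion_smul hc)
    hJ.iUnion_smul_subset (r := 1) fun z => ?_
  obtain ⟨b, hb⟩ := exists_dist_gaussianInt_le (z - p)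
  have htranslate : (⟨1, b⟩ : Motion) • p = p + b := by simp [smul_eq]
  refine ⟨p + b, mem_iUnion.2 ⟨⟨1, b⟩, htranslate ▸ smul_mem_smul_set hp⟩, ?_⟩
  rwa [dist_eq_norm, ← sub_sub, ← dist_eq_norm]

theorem isFundamentalDomain (hJ : IsSelfSimilar J) (hc : IsCompact J) (hne : J.Nonempty) :
    IsFundamentalDomain Motion J := by
  refine .mk'' hc.measurableSet.nullMeasurableSet (.of_forall fun z => ?_)
    (fun g hg => (hJ.aedisjoint_smul_of_separated hc (.of_ne_one hg)).symm)
    fun g => (measurePreserving_smul g volume).quasiMeasurePreserving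
  obtain ⟨g, hg⟩ := mem_iUnion.1 ((hJ.iUnion_smul_eq_univ hc hne).ge (mem_univ z))
  exact ⟨g⁻¹, mem_smul_set_iff_inv_smul_mem.1 hg⟩

end IsSelfSimilar

theorem four_mul_volume_of_isFundamentalDomain {s : Set ℂ} (hs : IsFundamentalDomain Motion s) :
    4 * volume s = 1 := by
  set F := ZSpan.fundamentalDomain basisOneI
  have : VAddInvariantMeasure lattice ℂ volume :=
    inferInstanceAs (VAddInvariantMeasure lattice.toAddSubgroup ℂ volume)
  have hF : IsAddFundamentalDomain lattice F := ZSpan.isAddFundamentalDomain basisOneI volume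
  calc 4 * volume s
      = ∑ u : GaussianIntˣ, volume (((u : GaussianInt) : ℂ) • s) := by
        simp only [volume_smul, normSq_coe_unit, ENNReal.ofReal_one, one_mul, Finset.sum_const,
          Finset.card_univ, card_units, nsmul_eq_mul, Nat.cast_ofNat]
    _ = ∑ u : GaussianIntˣ, ∑' b : lattice, volume (F ∩ (b +ᵥ ((u : GaussianInt) : ℂ) • s)) := by
        simp_rw [inter_comm F, ← hF.measure_eq_tsum]
    _ = ∑' g : Motion, volume (F ∩ g • s) := by
        rw [← Motion.equivProd.symm.tsum_eq, ENNReal.tsum_prod', tsum_fintype]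
        simp only [Motion.equivProd_symm_smul]
    _ = 1 := by rw [← hs.measure_eq_tsum', volume_fundamentalDomain_basisOneI]

theorem isSelfSimilar_inv_two_smul {K : Set ℂ}
    (hK : K = (fun z : ℂ => ((1 + I) / 2) * z) '' K ∪
      (fun z : ℂ => ((1 - I) / 2) * z + 1 + I) '' K) :
    IsSelfSimilar ((2⁻¹ : ℂ) • K) := by
  unfold IsSelfSimilar
  conv_lhs => rw [hK]
  simp only [Motion.digits, Finset.mem_insert, Finset.mem_singleton, iUnion_iUnion_eq_or_left,
    iUnion_iUnion_eq_left, one_smul, ← image_smul, image_union, image_image]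
  congr 2 <;> funext z
  · simp only [smul_eq_mul]
    linear_combination (-z / 4) * I_sq
  · simp only [smul_eq_mul, Motion.smul_eq, Motion.quarterTurn, Units.val_neg, map_neg, coe_iUnit,
      map_one]
    linear_combination (z / 4 - 1 / 2) * I_sq

end LevyDragon

open LevyDragon in
/-- The Lévy dragon, the attractor of `g₁(z) = ((1+i)/2)z`,
`g₂(z) = ((1-i)/2)z + 1 + i`, has two-dimensional Lebesgue measure `1`. -/
theorem levy_dragon_volume_eq_one (K : Set ℂ)
    (hne : K.Nonempty) (hc : IsCompact K)
    (hK : K = (fun z : ℂ => ((1 + Complex.I) / 2) * z) '' K ∪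
              (fun z : ℂ => ((1 - Complex.I) / 2) * z + 1 + Complex.I) '' K) :
    volume K = 1 := by
  have hquarter := four_mul_volume_of_isFundamentalDomain
    ((isSelfSimilar_inv_two_smul hK).isFundamentalDomain (hc.smul _) (hne.smul_set))
  rw [volume_smul, ← mul_assoc] at hquarter
  have hscale : (4 : ENNReal) * ENNReal.ofReal (Complex.normSq 2⁻¹) = 1 := by
    rw [← ENNReal.ofReal_ofNat 4, ← ENNReal.ofReal_mul (by norm_num)]
    norm_num [Complex.normSq_apply]
  rwa [hscale, one_mul] at hquarter
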